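/- Let m ≥ 1 and let B_+, B_- ⊂ ℤ be nonempty disjoint arithmetic progressions with common difference m satisfying max B_+ + m ≠ min B_- and max B_- + m ≠ min B_+. Define A_+ := {max B_+ + i·m : 0 ≤ i ≤ |B_-|} and A_- := {max B_- + i·m : 0 ≤ i ≤ |B_+|}. Then A_+ and A_- are disjoint arithmetic progressions with common difference m, each containing at least two elements, and moreover B_+ = {min A_+ − i·m : 0 ≤ i ≤ |A_-| − 2} and B_- = {min A_- − i·m : 0 ≤ i ≤ |A_+| − 2}. -/

import Mathlib

/-- A finite set `A ⊆ ℤ` is an arithmetic progression with common difference `m`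
if `A = {a + i·m : 0 ≤ i ≤ s}` for some `a ∈ ℤ` and integer `s ≥ 0`. -/
def IsAPWith (m : ℤ) (A : Finset ℤ) : Prop :=
  ∃ a : ℤ, ∃ s : ℕ, A = (Finset.range (s + 1)).image (fun i : ℕ => a + (i : ℤ) * m)

theorem ap_card (m : ℤ) (hm : 1 ≤ m) (a : ℤ) (n : ℕ) :
    ((Finset.range n).image (fun i : ℕ => a + (i : ℤ) * m)).card = n := by
  rw [Finset.card_image_of_injective, Finset.card_range]
  intro i j h
  have h' : (i : ℤ) * m = (j : ℤ) * m := by simpa using h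
  have := mul_right_cancel₀ (by omega : m ≠ 0) h'
  exact_mod_cast this

theorem ap_min (m : ℤ) (hm : 1 ≤ m) (a : ℤ) (s : ℕ) (A : Finset ℤ) (hA : A.Nonempty)
    (h : A = (Finset.range (s + 1)).image (fun i : ℕ => a + (i : ℤ) * m)) :
    A.min' hA = a := by
  apply le_antisymm
  · apply Finset.min'_le
    rw [h, Finset.mem_image]
    exact ⟨0, by simp, by simp⟩
  · apply Finset.le_min'
    intro y hy
    rw [h, Finset.mem_image] at hy
    obtain ⟨i, _, rfl⟩ := hy
    have : 0 ≤ (i : ℤ) * m := by positivity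
    omega

theorem ap_max (m : ℤ) (hm : 1 ≤ m) (a : ℤ) (s : ℕ) (A : Finset ℤ) (hA : A.Nonempty)
    (h : A = (Finset.range (s + 1)).image (fun i : ℕ => a + (i : ℤ) * m)) :
    A.max' hA = a + s * m := by
  apply le_antisymm
  · apply Finset.max'_le
    intro y hy
    rw [h, Finset.mem_image] at hy
    obtain ⟨i, hi, rfl⟩ := hy
    have hi' : (i : ℤ) ≤ s := by have := Finset.mem_range.1 hi; omega
    have : (i : ℤ) * m ≤ s * m := mul_le_mul_of_nonneg_right hi' (by omega)
    omega
  · apply Finset.le_max'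
    rw [h, Finset.mem_image]
    exact ⟨s, by simp, rfl⟩

theorem ap_rev (m a : ℤ) (s : ℕ) :
    (Finset.range (s + 1)).image (fun i : ℕ => a + (i : ℤ) * m) =
    (Finset.range (s + 1)).image (fun i : ℕ => a + s * m - (i : ℤ) * m) := by
  ext x
  simp only [Finset.mem_image, Finset.mem_range]
  constructor
  · rintro ⟨i, hi, rfl⟩
    refine ⟨s - i, by omega, ?_⟩
    rw [Nat.cast_sub (by omega)]; ring
  · rintro ⟨i, hi, rfl⟩
    refine ⟨s - i, by omega, ?_⟩
    rw [Nat.cast_sub (by omega)]; ring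

/-- Surjectivity of the map φ of Proposition 3.1. From nonempty disjoint
non-consecutive arithmetic progressions `B₊, B₋` with common difference `m`, the sets
`A₊ = {max B₊ + i·m : 0 ≤ i ≤ |B₋|}` and `A₋ = {max B₋ + i·m : 0 ≤ i ≤ |B₊|}` are
disjoint arithmetic progressions with common difference `m`, each with at least two
elements, and `B₊ = {min A₊ − i·m : 0 ≤ i ≤ |A₋|−2}`,
`B₋ = {min A₋ − i·m : 0 ≤ i ≤ |A₊|−2}`. -/
theorem statement7 (m : ℤ) (hm : 1 ≤ m) (Bp Bm : Finset ℤ)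
    (hne₁ : Bp.Nonempty) (hne₂ : Bm.Nonempty) (hdisjB : Disjoint Bp Bm)
    (hBPp : IsAPWith m Bp) (hBPm : IsAPWith m Bm)
    (hnc₁ : Bp.max' hne₁ + m ≠ Bm.min' hne₂) (hnc₂ : Bm.max' hne₂ + m ≠ Bp.min' hne₁)
    (Ap Am : Finset ℤ)
    (hAp : Ap = (Finset.range (Bm.card + 1)).image (fun i : ℕ => Bp.max' hne₁ + (i : ℤ) * m))
    (hAm : Am = (Finset.range (Bp.card + 1)).image (fun i : ℕ => Bm.max' hne₂ + (i : ℤ) * m)) :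
    Disjoint Ap Am ∧ IsAPWith m Ap ∧ IsAPWith m Am ∧ 2 ≤ Ap.card ∧ 2 ≤ Am.card ∧
      ∃ (h₁ : Ap.Nonempty) (h₂ : Am.Nonempty),
        Bp = (Finset.range (Am.card - 1)).image (fun i : ℕ => Ap.min' h₁ - (i : ℤ) * m) ∧
        Bm = (Finset.range (Ap.card - 1)).image (fun i : ℕ => Am.min' h₂ - (i : ℤ) * m) := by
  obtain ⟨a, s, ha⟩ := hBPp
  obtain ⟨b, t, hb⟩ := hBPm
  have cp : Bp.card = s + 1 := by rw [ha]; exact ap_card m hm a _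
  have cm : Bm.card = t + 1 := by rw [hb]; exact ap_card m hm b _
  rw [ap_max m hm a s Bp hne₁ ha, ap_min m hm b t Bm hne₂ hb] at hnc₁
  rw [ap_max m hm b t Bm hne₂ hb, ap_min m hm a s Bp hne₁ ha] at hnc₂
  rw [ap_max m hm a s Bp hne₁ ha, cm] at hAp
  rw [ap_max m hm b t Bm hne₂ hb, cp] at hAm
  have cAp : Ap.card = t + 1 + 1 := by rw [hAp]; exact ap_card m hm _ _
  have cAm : Am.card = s + 1 + 1 := by rw [hAm]; exact ap_card m hm _ _
  have nAp : Ap.Nonempty := Finset.card_pos.1 (by omega)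
  have nAm : Am.Nonempty := Finset.card_pos.1 (by omega)
  refine ⟨?_, ⟨_, _, hAp⟩, ⟨_, _, hAm⟩, by omega, by omega, nAp, nAm, ?_, ?_⟩
  · rw [Finset.disjoint_left]
    intro x hx hy
    rw [hAp, Finset.mem_image] at hx
    rw [hAm, Finset.mem_image] at hy
    obtain ⟨i, hi, hix⟩ := hx
    obtain ⟨j, hj, hjx⟩ := hy
    rw [Finset.mem_range] at hi hj
    obtain ⟨k, hk⟩ : ∃ k : ℤ, k = s + i - t - j := ⟨_, rfl⟩
    have hba : b = a + k * m := by rw [hk]; linarith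
    rw [Finset.disjoint_left] at hdisjB
    by_cases h0 : 0 ≤ k
    · by_cases h1 : k ≤ s
      · apply hdisjB (a := b)
        · rw [ha, Finset.mem_image]
          refine ⟨k.toNat, Finset.mem_range.2 (by omega), ?_⟩
          rw [Int.toNat_of_nonneg h0, hba]
        · rw [hb, Finset.mem_image]
          exact ⟨0, by simp, by simp⟩
      · have h2 : k = s + 1 := by omega
        apply hnc₁
        rw [hba, h2]; ring
    · by_cases h1 : -k ≤ t
      · apply hdisjB (a := a)
        · rw [ha, Finset.mem_image]
          exact ⟨0, by simp, by simp⟩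
        · rw [hb, Finset.mem_image]
          refine ⟨(-k).toNat, Finset.mem_range.2 (by omega), ?_⟩
          rw [Int.toNat_of_nonneg (by omega), hba]; ring
      · have h2 : k = -(t + 1) := by omega
        apply hnc₂
        rw [hba, h2]; ring
  · rw [ap_min m hm _ _ Ap nAp hAp, cAm, ha]
    exact ap_rev m a s
  · rw [ap_min m hm _ _ Am nAm hAm, cAp, hb]
    exact ap_rev m b t
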